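/- arXiv:2405.19809 — 2 statements merged into one kernel-verified Lean document; each statement's English description precedes it below -/
import Mathlib

section
/- Let F : E → ℝ be L-smooth and (γ,μ)-strongly quasar convex with respect to its minimizer x* for some 0 < μ ≤ L and γ ∈ (0,1]. Let (x_n, y_n, z_n) be generated by Algorithm 1 with stepsize s = γ²μ/L², z₀ = x₀ and constant parameters α = 1/(1 + √(μs)), β = 1 − γ√(μs), η = √(s/μ). Then for all n ∈ ℕ, F(x_n) − F(x*) ≤ (2/γ)(1 − γ²μ/L)ⁿ (F(x₀) − F(x*)). -/
open scoped RealInnerProductSpace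

section

variable {E : Type*} [NormedAddCommGroup E] [InnerProductSpace ℝ E] [CompleteSpace E]

theorem HasGradientAt.hasDerivAt_comp_add_smul {f : E → ℝ} {g a d : E} {t : ℝ}
    (hf : HasGradientAt f g (a + t • d)) :
    HasDerivAt (fun r : ℝ => f (a + r • d)) ⟪g, d⟫ t := by
  have hline : HasDerivAt (fun r : ℝ => a + r • d) d t := by
    simpa using ((hasDerivAt_id t).smul_const d).const_add a
  have h := hf.hasFDerivAt.comp_hasDerivAt t hline
  rw [InnerProductSpace.toDual_apply_apply] at h
  exact h

/-- Quadratic lower bound for a function with Lipschitz gradient. -/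
theorem quadratic_lower_bound_of_lipschitz_gradient {f : E → ℝ} {g : E → E} {L : ℝ}
    (hf : ∀ p, HasGradientAt f (g p) p) (hg : ∀ p q, ‖g p - g q‖ ≤ L * ‖p - q‖) (a d : E) :
    f a + ⟪g a, d⟫ - L / 2 * ‖d‖ ^ 2 ≤ f (a + d) := by
  set h : ℝ → ℝ := fun t => f (a + t • d) - t * ⟪g a, d⟫ + L / 2 * ‖d‖ ^ 2 * t ^ 2 with hh
  have hderiv (t : ℝ) :
      HasDerivAt h (⟪g (a + t • d), d⟫ - ⟪g a, d⟫ + L / 2 * ‖d‖ ^ 2 * (2 * t)) t := by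
    have h₁ := (hf (a + t • d)).hasDerivAt_comp_add_smul
    have h₂ := (hasDerivAt_id t).mul_const ⟪g a, d⟫
    have h₃ := (hasDerivAt_pow 2 t).const_mul (L / 2 * ‖d‖ ^ 2)
    refine ((h₁.sub h₂).add h₃).congr_deriv ?_
    simp
  have hmono : MonotoneOn h (Set.Icc 0 1) := by
    refine monotoneOn_of_hasDerivWithinAt_nonneg (convex_Icc 0 1)
      (fun t _ => (hderiv t).continuousAt.continuousWithinAt)
      (fun t _ => (hderiv t).hasDerivWithinAt) ?_
    intro t ht
    rw [interior_Icc] at ht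
    have hinner : -⟪g (a + t • d) - g a, d⟫ ≤ L * (t * ‖d‖) * ‖d‖ := by
      refine (neg_le_abs _).trans ((abs_real_inner_le_norm _ _).trans ?_)
      have hlip := hg (a + t • d) a
      rw [add_sub_cancel_left, norm_smul, Real.norm_of_nonneg ht.1.le] at hlip
      gcongr
    rw [inner_sub_left] at hinner
    linarith
  have hle := hmono (Set.left_mem_Icc.2 zero_le_one) (Set.right_mem_Icc.2 zero_le_one) zero_le_one
  simp only [hh, zero_smul, one_smul, add_zero] at hle
  linarith

/-- The descent lemma for a function with Lipschitz gradient. -/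
theorem quadratic_upper_bound_of_lipschitz_gradient {f : E → ℝ} {g : E → E} {L : ℝ}
    (hf : ∀ p, HasGradientAt f (g p) p) (hg : ∀ p q, ‖g p - g q‖ ≤ L * ‖p - q‖) (a d : E) :
    f (a + d) ≤ f a + ⟪g a, d⟫ + L / 2 * ‖d‖ ^ 2 := by
  have hneg (p : E) : HasGradientAt (fun q => -f q) (-g p) p := by
    rw [hasGradientAt_iff_hasFDerivAt, map_neg]
    exact (hf p).hasFDerivAt.neg
  have hglip (p q : E) : ‖-g p - -g q‖ ≤ L * ‖p - q‖ := by
    rw [neg_sub_neg, norm_sub_rev]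
    exact hg p q
  have := quadratic_lower_bound_of_lipschitz_gradient hneg hglip a d
  rw [inner_neg_left] at this
  linarith

/-- Strongly quasar convex functions grow at least quadratically away from the minimizer. -/
theorem quadratic_growth_of_strongly_quasar_convex {f : E → ℝ} {g : E → E} {γ μ : ℝ} {m : E}
    (hf : ∀ p, HasGradientAt f (g p) p) (hμ : 0 ≤ μ) (hγ0 : 0 < γ) (hγ1 : γ ≤ 1)
    (hmin : ∀ p, f m ≤ f p)
    (hqc : ∀ p, f m ≥ f p + (1 / γ) * ⟪g p, m - p⟫ + μ / 2 * ‖m - p‖ ^ 2) (p : E) :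
    γ * (μ / 2 * ‖p - m‖ ^ 2) ≤ (2 - γ) * (f p - f m) := by
  set d := p - m with hd
  set D := γ * (μ / 2 * ‖d‖ ^ 2) with hD
  have hD0 : 0 ≤ D := by positivity
  set ψ : ℝ → ℝ := fun t => (2 - γ) * (f (m + t • d) - f m) - D * t ^ 2 with hψ
  have hψderiv (t : ℝ) :
      HasDerivAt ψ ((2 - γ) * ⟪g (m + t • d), d⟫ - D * (2 * t)) t := by
    have h₁ := ((hf (m + t • d)).hasDerivAt_comp_add_smul.sub_const (f m)).const_mul (2 - γ)
    have h₂ := (hasDerivAt_pow 2 t).const_mul D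
    refine (h₁.sub h₂).congr_deriv ?_
    simp
  have hgrow (t : ℝ) : γ * ψ t ≤ t * ((2 - γ) * ⟪g (m + t • d), d⟫ - D * (2 * t)) := by
    have h := hqc (m + t • d)
    rw [sub_add_cancel_left, inner_neg_right, real_inner_smul_right, norm_neg, norm_smul, mul_pow,
      Real.norm_eq_abs, sq_abs] at h
    have h' : γ * (f (m + t • d) - f m) + D * t ^ 2 ≤ t * ⟪g (m + t • d), d⟫ := by
      have := mul_le_mul_of_nonneg_left h hγ0.le
      have hγ : γ * (1 / γ) = 1 := by field_simp
      rw [hD]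
      linear_combination this + hγ * (t * ⟪g (m + t • d), d⟫)
    have := mul_le_mul_of_nonneg_left h' (by linarith : 0 ≤ 2 - γ)
    simp only [hψ]
    linear_combination this
  have hmono : MonotoneOn (fun t : ℝ => ψ t * t ^ (-γ)) (Set.Ioi 0) := by
    have hderiv (t : ℝ) (ht : 0 < t) := (hψderiv t).mul
      (Real.hasDerivAt_rpow_const (x := t) (p := -γ) (Or.inl ht.ne'))
    refine monotoneOn_of_hasDerivWithinAt_nonneg (convex_Ioi 0)
      (fun t ht => (hderiv t ht).continuousAt.continuousWithinAt)
      (fun t ht => (hderiv t (interior_subset ht)).hasDerivWithinAt) ?_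
    intro t ht
    rw [interior_Ioi, Set.mem_Ioi] at ht
    have hsplit : t ^ (-γ) = t * t ^ (-γ - 1) := by
      rw [Real.rpow_sub_one ht.ne']
      field_simp
    have := mul_nonneg (sub_nonneg.2 (hgrow t)) (Real.rpow_nonneg ht.le (-γ - 1))
    rw [hsplit]
    linear_combination this
  have hbound (t : ℝ) (ht0 : 0 < t) (ht1 : t ≤ 1) : -(D * t) ≤ ψ 1 := by
    have hle := hmono (Set.mem_Ioi.2 ht0) (Set.mem_Ioi.2 one_pos) ht1
    simp only [Real.one_rpow, mul_one] at hle
    refine le_trans ?_ hle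
    have hpow : t * t ^ (-γ) ≤ 1 := by
      have hadd := Real.rpow_add ht0 1 (-γ)
      rw [Real.rpow_one] at hadd
      rw [← hadd]
      exact Real.rpow_le_one ht0.le ht1 (by linarith)
    have hψt : -(D * t ^ 2) ≤ ψ t := by
      have := mul_nonneg (by linarith : 0 ≤ 2 - γ) (sub_nonneg.2 (hmin (m + t • d)))
      simp only [hψ]
      linarith
    have h₁ := mul_le_mul_of_nonneg_right hψt (Real.rpow_nonneg ht0.le (-γ))
    have h₂ := mul_le_mul_of_nonneg_left hpow (mul_nonneg hD0 ht0.le)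
    linear_combination h₁ + h₂
  have hψ1 : 0 ≤ ψ 1 := by
    have hlim : Filter.Tendsto (fun t : ℝ => -(D * t)) (nhdsWithin 0 (Set.Ioi 0)) (nhds 0) := by
      have : Continuous fun t : ℝ => -(D * t) := by fun_prop
      simpa using (this.tendsto 0).mono_left nhdsWithin_le_nhds
    refine le_of_tendsto hlim ?_
    filter_upwards [Ioc_mem_nhdsGT (zero_lt_one' ℝ)] with t ht
    exact hbound t ht.1 ht.2
  have hp : m + (1 : ℝ) • d = p := by simp [hd]
  simp only [hψ, hp] at hψ1
  linarith

/-- One step of the accelerated scheme contracts the Lyapunov function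
`f x - f m + μ / 2 * ‖z - m‖ ^ 2`. -/
theorem lyapunov_contraction_of_strongly_quasar_convex {f : E → ℝ} {g : E → E}
    {L γ μ κ η s : ℝ} {m x y z : E}
    (hf : ∀ p, HasGradientAt f (g p) p) (hg : ∀ p q, ‖g p - g q‖ ≤ L * ‖p - q‖)
    (hγ0 : 0 < γ) (hκ0 : 0 ≤ κ) (hγκ : γ * κ ≤ 1) (hs0 : 0 ≤ s) (hLs : L * s ≤ 1)
    (hη : μ * η = κ) (hs : κ * η = s) (hκ : L * κ = γ * μ)
    (hqc : f m ≥ f y + (1 / γ) * ⟪g y, m - y⟫ + μ / 2 * ‖m - y‖ ^ 2)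
    (hxy : x = y + (-κ) • (z - y)) :
    f (y - s • g y) - f m
        + μ / 2 * ‖(1 - γ * κ) • z + (γ * κ) • y - η • g y - m‖ ^ 2
      ≤ (1 - γ * κ) * (f x - f m + μ / 2 * ‖z - m‖ ^ 2) := by
  obtain ⟨a, rfl⟩ : ∃ a, m = y - a := ⟨y - m, by abel⟩
  obtain ⟨w, rfl⟩ : ∃ w, z = y + w := ⟨z - y, by abel⟩
  have hlow := quadratic_lower_bound_of_lipschitz_gradient hf hg y ((-κ) • (y + w - y))
  rw [← hxy] at hlow
  have hup := quadratic_upper_bound_of_lipschitz_gradient hf hg y ((-s) • g y)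
  rw [neg_smul, ← sub_eq_add_neg] at hup
  have hz' : (1 - γ * κ) • (y + w) + (γ * κ) • y - η • g y - (y - a)
      = a + (1 - γ * κ) • w - η • g y := by module
  have hzm : y + w - (y - a) = a + w := by abel
  rw [hz', hzm]
  have hm : y - a - y = -a := by abel
  rw [hm] at hqc
  simp only [add_sub_cancel_left, ← real_inner_self_eq_norm_sq, inner_add_left, inner_add_right,
    inner_sub_left, inner_sub_right, inner_neg_left, inner_neg_right, real_inner_smul_left,
    real_inner_smul_right, real_inner_comm a w, real_inner_comm a (g y),
    real_inner_comm w (g y)] at hlow hup hqc ⊢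
  have hlow' := mul_le_mul_of_nonneg_left hlow (sub_nonneg.2 hγκ)
  have hqc' := mul_le_mul_of_nonneg_left hqc (mul_nonneg hγ0.le hκ0)
  have hγ : γ * (1 / γ) = 1 := by field_simp
  have hstep := mul_nonneg (mul_nonneg hs0 (sub_nonneg.2 hLs)) (real_inner_self_nonneg (x := g y))
  linear_combination hup + hlow' + hqc' + hstep / 2
    + hγ * (κ * ⟪a, g y⟫) + hs * (⟪g y, g y⟫ / 2)
    + hκ * ((1 - γ * κ) * κ / 2 * ⟪w, w⟫)
    + hη * (η / 2 * ⟪g y, g y⟫ - ⟪a, g y⟫ - (1 - γ * κ) * ⟪w, g y⟫)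

end

/-- without a curvature assumption, Nesterov accelerated gradient
(3-points form) with the small step size `s = γ²μ/L²` converges linearly with
rate `1 - γ²μ/L` for `L`-smooth `(γ,μ)`-strongly quasar convex functions. -/
theorem stmt_3 {E : Type*} [NormedAddCommGroup E] [InnerProductSpace ℝ E]
    [FiniteDimensional ℝ E]
    (F : E → ℝ) (hF : Differentiable ℝ F)
    (L μ γ s : ℝ) (hμ : 0 < μ) (hμL : μ ≤ L) (hγ0 : 0 < γ) (hγ1 : γ ≤ 1)
    (hLip : ∀ x y : E, ‖gradient F x - gradient F y‖ ≤ L * ‖x - y‖)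
    (xstar : E) (hmin : ∀ x : E, F xstar ≤ F x)
    (hqc : ∀ x : E,
      F xstar ≥ F x + (1 / γ) * ⟪gradient F x, xstar - x⟫ + μ / 2 * ‖xstar - x‖ ^ 2)
    (hs : s = γ ^ 2 * μ / L ^ 2)
    (x y z : ℕ → E) (hz0 : z 0 = x 0)
    (hy : ∀ n : ℕ, y n = (1 / (1 + Real.sqrt (μ * s))) • x n
      + (1 - 1 / (1 + Real.sqrt (μ * s))) • z n)
    (hx : ∀ n : ℕ, x (n + 1) = y n - s • gradient F (y n))
    (hz : ∀ n : ℕ, z (n + 1) = (1 - γ * Real.sqrt (μ * s)) • z n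
      + (γ * Real.sqrt (μ * s)) • y n - Real.sqrt (s / μ) • gradient F (y n)) :
    ∀ n : ℕ, F (x n) - F xstar
      ≤ 2 / γ * (1 - γ ^ 2 * μ / L) ^ n * (F (x 0) - F xstar) := by
  have hL : 0 < L := hμ.trans_le hμL
  have hγμL : γ * μ ≤ L := (mul_le_of_le_one_left hμ.le hγ1).trans hμL
  have hκ : Real.sqrt (μ * s) = γ * μ / L := by
    rw [show μ * s = (γ * μ / L) ^ 2 by rw [hs]; ring, Real.sqrt_sq (by positivity)]
  have hη : Real.sqrt (s / μ) = γ / L := by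
    rw [show s / μ = (γ / L) ^ 2 by rw [hs]; field_simp, Real.sqrt_sq (by positivity)]
  rw [hκ] at hy hz
  rw [hη] at hz
  have hκ1 : γ * μ / L ≤ 1 := (div_le_one hL).2 hγμL
  have hrate : γ * (γ * μ / L) = γ ^ 2 * μ / L := by ring
  have hγκ : γ * (γ * μ / L) ≤ 1 := mul_le_one₀ hγ1 (by positivity) hκ1
  have hrate0 : 0 ≤ 1 - γ ^ 2 * μ / L := by rw [← hrate]; exact sub_nonneg.2 hγκ
  have hgrad (p : E) : HasGradientAt F (gradient F p) p := (hF p).hasGradientAt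
  have hstep (n : ℕ) : F (x (n + 1)) - F xstar + μ / 2 * ‖z (n + 1) - xstar‖ ^ 2
      ≤ (1 - γ ^ 2 * μ / L) * (F (x n) - F xstar + μ / 2 * ‖z n - xstar‖ ^ 2) := by
    rw [hx, hz, ← hrate]
    refine lyapunov_contraction_of_strongly_quasar_convex hgrad hLip hγ0 (by positivity) hγκ
      (by rw [hs]; positivity) ?_ (by field_simp) (by rw [hs]; field_simp) (by field_simp)
      (hqc (y n)) ?_
    · have : L * s = γ * (γ * μ / L) := by rw [hs]; field_simp
      rwa [this]
    · have h1 : 1 + γ * μ / L ≠ 0 := by positivity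
      have hyn : (1 + γ * μ / L) • y n = x n + (γ * μ / L) • z n := by
        rw [hy n, smul_add, smul_smul, smul_smul, mul_sub, mul_one_div_cancel h1]
        module
      rw [← sub_eq_zero] at hyn ⊢
      rw [← neg_eq_zero, ← hyn]
      module
  have hlyap (n : ℕ) : F (x n) - F xstar + μ / 2 * ‖z n - xstar‖ ^ 2
      ≤ (1 - γ ^ 2 * μ / L) ^ n * (F (x 0) - F xstar + μ / 2 * ‖z 0 - xstar‖ ^ 2) := by
    induction n with
    | zero => simp
    | succ n ih =>
      refine (hstep n).trans ?_
      rw [pow_succ' _ n, mul_assoc]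
      exact mul_le_mul_of_nonneg_left ih hrate0
  intro n
  have hinit : F (x 0) - F xstar + μ / 2 * ‖z 0 - xstar‖ ^ 2
      ≤ 2 / γ * (F (x 0) - F xstar) := by
    have := quadratic_growth_of_strongly_quasar_convex hgrad hμ.le hγ0 hγ1 hmin hqc (x 0)
    rw [hz0, div_mul_eq_mul_div 2 γ, le_div_iff₀ hγ0]
    linarith
  calc F (x n) - F xstar ≤ F (x n) - F xstar + μ / 2 * ‖z n - xstar‖ ^ 2 :=
        le_add_of_nonneg_right (by positivity)
    _ ≤ (1 - γ ^ 2 * μ / L) ^ n * (2 / γ * (F (x 0) - F xstar)) :=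
        (hlyap n).trans (mul_le_mul_of_nonneg_left hinit (pow_nonneg hrate0 n))
    _ = 2 / γ * (1 - γ ^ 2 * μ / L) ^ n * (F (x 0) - F xstar) := by ring
end

section
/- Let F : E → ℝ be L-smooth and (γ,μ)-strongly quasar convex with respect to its minimizer x*, for some 0 < μ ≤ L and γ ∈ (0,1]. Then F satisfies the uniform acute angle condition: there exists a > 0 (one may take a = γμ/((2−γ)L)) such that for all x ≠ x*, ⟨∇F(x), x − x*⟩ ≥ a‖∇F(x)‖·‖x − x*‖. -/
open scoped RealInnerProductSpace

/-- If `t * k' t ≥ γ * k t` on `(0, ∞)`, and `k` is bounded below by a multiple of `-t ^ 2` there,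
then `k 1 ≥ 0` as soon as `γ ≤ 1`. -/
lemma nonneg_at_one_of_mul_deriv_ge {k k' : ℝ → ℝ} {γ c : ℝ} (hγ1 : γ ≤ 1) (hc : 0 ≤ c)
    (hk : ∀ t, 0 < t → HasDerivAt k (k' t) t)
    (hk' : ∀ t, 0 < t → γ * k t ≤ t * k' t)
    (hlow : ∀ t, 0 < t → -(c * t ^ 2) ≤ k t) : 0 ≤ k 1 := by
  have hψ : ∀ t, 0 < t → HasDerivAt (fun s : ℝ => s ^ (-γ) * k s)
      ((-γ) * t ^ (-γ - 1) * k t + t ^ (-γ) * k' t) t := fun t ht =>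
    (Real.hasDerivAt_rpow_const (Or.inl ht.ne')).mul (hk t ht)
  have hmono : MonotoneOn (fun s : ℝ => s ^ (-γ) * k s) (Set.Ioi 0) := by
    refine monotoneOn_of_deriv_nonneg (convex_Ioi 0)
      (fun t ht => (hψ t ht).continuousAt.continuousWithinAt)
      (fun t ht => (hψ t (by simpa using ht)).differentiableAt.differentiableWithinAt) ?_
    intro t ht
    have ht : 0 < t := by simpa using ht
    rw [(hψ t ht).deriv]
    have hpow : t ^ (-γ) = t ^ (-γ - 1) * t := by
      rw [← Real.rpow_add_one ht.ne']
      ring_nf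
    have := mul_nonneg (Real.rpow_nonneg ht.le (-γ - 1)) (sub_nonneg.2 (hk' t ht))
    rw [hpow]
    linarith
  have hbound : ∀ t : ℝ, 0 < t → t ≤ 1 → -(c * t) ≤ k 1 := by
    intro t ht ht1
    have h1 : t ^ (-γ) * k t ≤ k 1 := by
      simpa using hmono (Set.mem_Ioi.2 ht) (Set.mem_Ioi.2 one_pos) ht1
    have h2 := mul_le_mul_of_nonneg_left (hlow t ht) (Real.rpow_nonneg ht.le (-γ))
    have h3 : t ^ (-γ) * t ≤ 1 := by
      rw [← Real.rpow_add_one ht.ne']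
      exact Real.rpow_le_one ht.le ht1 (by linarith)
    have h4 := mul_le_mul_of_nonneg_left h3 (mul_nonneg hc ht.le)
    linarith
  have hlim : Filter.Tendsto (fun t : ℝ => -(c * t)) (nhdsWithin 0 (Set.Ioi 0)) (nhds 0) := by
    have : Continuous fun t : ℝ => -(c * t) := by fun_prop
    simpa using (this.tendsto 0).mono_left nhdsWithin_le_nhds
  refine le_of_tendsto hlim ?_
  filter_upwards [Ioc_mem_nhdsGT one_pos] with t ht using hbound t ht.1 ht.2

/-- Quadratic growth of strongly quasar convex functions. -/
lemma quadratic_growth_of_strongly_quasar_convex_s11 {E : Type*} [NormedAddCommGroup E]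
    [InnerProductSpace ℝ E] [CompleteSpace E] {F : E → ℝ} (hF : Differentiable ℝ F)
    {μ γ : ℝ} (hμ : 0 ≤ μ) (hγ0 : 0 < γ) (hγ1 : γ ≤ 1)
    {xstar : E} (hmin : ∀ x : E, F xstar ≤ F x)
    (hqc : ∀ x : E,
      F xstar ≥ F x + (1 / γ) * ⟪gradient F x, xstar - x⟫ + μ / 2 * ‖xstar - x‖ ^ 2) (x : E) :
    γ * μ / (2 * (2 - γ)) * ‖x - xstar‖ ^ 2 ≤ F x - F xstar := by
  have h2γ : 0 < 2 - γ := by linarith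
  set d := x - xstar with hd
  set c := γ * μ / (2 * (2 - γ)) * ‖d‖ ^ 2 with hc
  have hc0 : 0 ≤ c := by positivity
  have hcγ : c * (2 - γ) = γ * μ / 2 * ‖d‖ ^ 2 := by
    rw [hc]
    field_simp
  have key := nonneg_at_one_of_mul_deriv_ge (γ := γ) (c := c)
    (k := fun t => F (xstar + t • d) - F xstar - c * t ^ 2)
    (k' := fun t => ⟪gradient F (xstar + t • d), d⟫ - c * (2 * t)) hγ1 hc0 ?_ ?_ ?_
  · simp only [one_smul, one_pow, mul_one, hd, add_sub_cancel] at key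
    linarith
  · intro t _
    have hline : HasDerivAt (fun s : ℝ => xstar + s • d) d t := by
      simpa using ((hasDerivAt_id t).smul_const d).const_add xstar
    have hcomp := (hF (xstar + t • d)).hasGradientAt.hasFDerivAt.comp_hasDerivAt t hline
    have hsq : HasDerivAt (fun s : ℝ => c * s ^ 2) (c * (2 * t)) t := by
      simpa using (hasDerivAt_pow 2 t).const_mul c
    exact ((hcomp.sub_const (F xstar)).sub hsq).congr_deriv (by simp)
  · intro t ht
    have h := hqc (xstar + t • d)
    have hsub : xstar - (xstar + t • d) = -(t • d) := by abel
    rw [hsub, inner_neg_right, inner_smul_right, norm_neg, norm_smul, Real.norm_of_nonneg ht.le,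
      ge_iff_le] at h
    have h' := mul_le_mul_of_nonneg_left h hγ0.le
    have hcancel : γ * (1 / γ) = 1 := by field_simp
    linear_combination h' + t ^ 2 * hcγ
      + t * ⟪gradient F (xstar + t • d), d⟫ * hcancel
  · intro t _
    have := hmin (xstar + t • d)
    linarith

/-- an `L`-smooth, `(γ,μ)`-strongly quasar convex function
satisfies the uniform acute angle condition, with constant
`a = γμ/((2-γ)L) > 0`. -/
theorem stmt_11 {E : Type*} [NormedAddCommGroup E] [InnerProductSpace ℝ E]
    [FiniteDimensional ℝ E]
    (F : E → ℝ) (hF : Differentiable ℝ F)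
    (L μ γ : ℝ) (hμ : 0 < μ) (hμL : μ ≤ L) (hγ0 : 0 < γ) (hγ1 : γ ≤ 1)
    (hLip : ∀ x y : E, ‖gradient F x - gradient F y‖ ≤ L * ‖x - y‖)
    (xstar : E) (hmin : ∀ x : E, F xstar ≤ F x)
    (hqc : ∀ x : E,
      F xstar ≥ F x + (1 / γ) * ⟪gradient F x, xstar - x⟫ + μ / 2 * ‖xstar - x‖ ^ 2) :
    ∃ a : ℝ, 0 < a ∧ a = γ * μ / ((2 - γ) * L) ∧
      ∀ x : E, x ≠ xstar →
        ⟪gradient F x, x - xstar⟫ ≥ a * (‖gradient F x‖ * ‖x - xstar‖) := by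
  have hL : 0 < L := by linarith
  have h2γ : 0 < 2 - γ := by linarith
  have ha : 0 < γ * μ / ((2 - γ) * L) := by positivity
  refine ⟨_, ha, rfl, fun x _ => ?_⟩
  have hgrad : gradient F xstar = 0 := by
    have : IsLocalMin F xstar := Filter.Eventually.of_forall hmin
    simp [gradient, this.fderiv_eq_zero]
  have hnorm : ‖gradient F x‖ ≤ L * ‖x - xstar‖ := by
    simpa [hgrad] using hLip x xstar
  have hgrowth := quadratic_growth_of_strongly_quasar_convex_s11 hF hμ.le hγ0 hγ1 hmin hqc x
  have hinner : γ * (F x - F xstar) + γ * μ / 2 * ‖x - xstar‖ ^ 2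
      ≤ ⟪gradient F x, x - xstar⟫ := by
    have h := hqc x
    rw [← neg_sub x xstar, inner_neg_right, norm_neg, ge_iff_le] at h
    have h' := mul_le_mul_of_nonneg_left h hγ0.le
    have hcancel : γ * (1 / γ) = 1 := by field_simp
    linear_combination h' + ⟪gradient F x, x - xstar⟫ * hcancel
  calc γ * μ / ((2 - γ) * L) * (‖gradient F x‖ * ‖x - xstar‖)
      ≤ γ * μ / ((2 - γ) * L) * (L * ‖x - xstar‖ * ‖x - xstar‖) := by gcongr
    _ = γ * (γ * μ / (2 * (2 - γ)) * ‖x - xstar‖ ^ 2) + γ * μ / 2 * ‖x - xstar‖ ^ 2 := by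
        field_simp
        ring
    _ ≤ γ * (F x - F xstar) + γ * μ / 2 * ‖x - xstar‖ ^ 2 := by gcongr
    _ ≤ ⟪gradient F x, x - xstar⟫ := hinner
end
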